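/- arXiv:1810.00153 — 3 statements merged into one kernel-verified Lean document; each statement's English description precedes it below -/
import Mathlib

section
/- For every t > 0 there exists an injective holomorphic function χ_t on the open unit disk 𝔻 = {z ∈ ℂ : |z| < 1} such that χ_t(0) = 0, χ_t(z) ≠ 1 for all z ∈ 𝔻, f_t(χ_t(z)) = z for all z ∈ 𝔻, and χ_t extends to a continuous function on the closed unit disk. -/
/-!
On the unit disk `|w| ≤ |f_t w|`, because `(1 + w) / (1 - w)` has nonnegative real part there
(`norm_f`, `norm_le_norm_f`), and `f_t` has no critical point `w` in the disk with `|f_t w| < 1`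
(`deriv_f_ne_zero`). Hence `f_t` restricts to a proper local homeomorphism from
`{w : |w| < 1, |f_t w| < 1}` to the disk. Connectedness of the disk and the single preimage of `0`
make it bijective (`exists_preimage`, `preimage_unique`), and `χ` is its inverse, holomorphic by
the inverse function theorem.

At a boundary point `z` every cluster value of `χ` is either `1` or a solution of `f_t w = z`.
The identity theorem makes the latter isolated, while the cluster set behaves like a connected set,
so it is a single point (`cluster_eq`). Thus `χ` has a limit at every boundary point, which gives
the continuous extension.
-/

noncomputable def f (t : ℝ) (z : ℂ) : ℂ :=
  z * Complex.exp ((t : ℂ) / 2 * ((1 + z) / (1 - z)))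

open Filter Topology Metric

lemma f_zero (t : ℝ) : f t 0 = 0 := by simp [f]

/-- At `w = 1` both quotients have denominator `0` and are `0` by convention, so the formula needs no
hypothesis. -/
lemma norm_f (t : ℝ) (w : ℂ) :
    ‖f t w‖ = ‖w‖ * Real.exp (t / 2 * ((1 - ‖w‖ ^ 2) / ‖1 - w‖ ^ 2)) := by
  have h : ((t : ℂ) / 2 * ((1 + w) / (1 - w))).re
      = t / 2 * ((1 - ‖w‖ ^ 2) / ‖1 - w‖ ^ 2) := by
    have h2 : ((t : ℂ) / 2) = ((t / 2 : ℝ) : ℂ) := by push_cast; rfl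
    rw [h2, Complex.re_ofReal_mul, Complex.div_re, ← Complex.normSq_eq_norm_sq,
      ← Complex.normSq_eq_norm_sq, ← add_div]
    congr 2
    simp [Complex.normSq_apply]
    ring
  rw [f, norm_mul, Complex.norm_exp, h]

lemma norm_le_norm_f {t : ℝ} (ht : 0 < t) {w : ℂ} (hw : ‖w‖ ≤ 1) : ‖w‖ ≤ ‖f t w‖ := by
  rw [norm_f]
  refine le_mul_of_one_le_right (norm_nonneg _) (Real.one_le_exp ?_)
  have : 0 ≤ 1 - ‖w‖ ^ 2 := by nlinarith [norm_nonneg w]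
  positivity

lemma ne_one_of_norm_lt {w : ℂ} (hw : ‖w‖ < 1) : w ≠ 1 := by
  rintro rfl
  simp at hw

lemma analyticAt_f (t : ℝ) {w : ℂ} (hw : w ≠ 1) : AnalyticAt ℂ (f t) w := by
  have : 1 - w ≠ 0 := sub_ne_zero.mpr hw.symm
  unfold f
  fun_prop (disch := assumption)

lemma continuousAt_f (t : ℝ) {w : ℂ} (hw : w ≠ 1) : ContinuousAt (f t) w :=
  (analyticAt_f t hw).continuousAt

lemma hasDerivAt_f (t : ℝ) {w : ℂ} (hw : w ≠ 1) :
    HasDerivAt (f t) (Complex.exp ((t : ℂ) / 2 * ((1 + w) / (1 - w))) *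
      (1 + t * w / (1 - w) ^ 2)) w := by
  have h0 : 1 - w ≠ 0 := sub_ne_zero.mpr hw.symm
  have h1 := (((hasDerivAt_id w).const_add 1).div ((hasDerivAt_id w).const_sub 1) h0).const_mul
    ((t : ℂ) / 2)
  refine ((hasDerivAt_id w).mul h1.cexp).congr_deriv ?_
  simp only [id, Pi.div_apply]
  field_simp
  ring

/-- A critical point `w` satisfies `t w = -(1 - w) ^ 2`, so `|f_t w| = r exp ((1 / r - r) / 2)` with
`r = |w|`; this is at least `1` because `x ≤ sinh x` at `x = log (1 / r)`. -/
lemma deriv_f_ne_zero {t : ℝ} (ht : 0 < t) {w : ℂ} (hw : ‖w‖ < 1) (hf : ‖f t w‖ < 1) :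
    deriv (f t) w ≠ 0 := by
  have hw1 := ne_one_of_norm_lt hw
  have h0 : 1 - w ≠ 0 := sub_ne_zero.mpr hw1.symm
  rw [(hasDerivAt_f t hw1).deriv]
  refine mul_ne_zero (Complex.exp_ne_zero _) fun h => hf.not_ge ?_
  have h1 : (t : ℂ) * w = -(1 - w) ^ 2 := by
    field_simp at h
    linear_combination h
  have h2 : t * ‖w‖ = ‖1 - w‖ ^ 2 := by
    have := congrArg norm h1
    simpa [abs_of_pos ht] using this
  have hr : 0 < ‖w‖ := by
    have : 0 < ‖1 - w‖ ^ 2 := by positivity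
    exact pos_of_mul_pos_right (h2 ▸ this) ht.le
  rw [norm_f, ← h2]
  have h3 : t / 2 * ((1 - ‖w‖ ^ 2) / (t * ‖w‖)) = (‖w‖⁻¹ - ‖w‖) / 2 := by
    field_simp
  have h4 : Real.log ‖w‖⁻¹ ≤ (‖w‖⁻¹ - ‖w‖) / 2 := by
    have h5 := Real.self_le_sinh_iff.mpr
      (Real.log_nonneg ((one_le_inv₀ hr).mpr hw.le))
    rwa [Real.sinh_log (inv_pos.mpr hr), inv_inv] at h5
  calc (1 : ℝ) = ‖w‖ * Real.exp (Real.log ‖w‖⁻¹) := by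
        rw [Real.exp_log (inv_pos.mpr hr), mul_inv_cancel₀ hr.ne']
    _ ≤ _ := by
        rw [h3]
        gcongr

lemma hasStrictDerivAt_f (t : ℝ) {w : ℂ} (hw : ‖w‖ < 1) :
    HasStrictDerivAt (f t) (deriv (f t) w) w :=
  (analyticAt_f t (ne_one_of_norm_lt hw)).hasStrictDerivAt

lemma eventually_mem_domain {t : ℝ} {w : ℂ} (hw : ‖w‖ < 1) (hf : ‖f t w‖ < 1) :
    ∀ᶠ v in 𝓝 w, ‖v‖ < 1 ∧ ‖f t v‖ < 1 :=
  ((continuous_norm.tendsto w).eventually_lt_const hw).and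
    ((continuousAt_f t (ne_one_of_norm_lt hw)).norm.tendsto.eventually_lt_const hf)

lemma f_map_nhds {t : ℝ} (ht : 0 < t) {w : ℂ} (hw : ‖w‖ < 1) (hf : ‖f t w‖ < 1) :
    map (f t) (𝓝 w) = 𝓝 (f t w) :=
  (hasStrictDerivAt_f t hw).map_nhds_eq (deriv_f_ne_zero ht hw hf)

/-- Properness of `f_t` over the disk: `|w| ≤ |f_t w|` keeps preimages of points of a convergent
sequence away from the unit circle. -/
lemma exists_limit_preimage {t : ℝ} (ht : 0 < t) {z : ℂ} (hz : ‖z‖ < 1) {w : ℕ → ℂ}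
    (hw : ∀ n, ‖w n‖ < 1) (hlim : Tendsto (fun n => f t (w n)) atTop (𝓝 z)) :
    ∃ a, ‖a‖ < 1 ∧ f t a = z ∧
      ∃ φ : ℕ → ℕ, StrictMono φ ∧ Tendsto (w ∘ φ) atTop (𝓝 a) := by
  obtain ⟨a, -, φ, hφ, ha⟩ := (isCompact_closedBall (0 : ℂ) 1).tendsto_subseq
    (x := w) (fun n => by simpa using (hw n).le)
  have hlim' := hlim.comp hφ.tendsto_atTop
  have ha1 : ‖a‖ < 1 := lt_of_le_of_lt
    (le_of_tendsto_of_tendsto' ha.norm hlim'.norm fun n => norm_le_norm_f ht (hw _).le) hz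
  exact ⟨a, ha1, tendsto_nhds_unique
    ((continuousAt_f t (ne_one_of_norm_lt ha1)).tendsto.comp ha) hlim', φ, hφ, ha⟩

lemma isPreconnected_ball_inter (z : ℂ) (r : ℝ) :
    IsPreconnected (ball (0 : ℂ) 1 ∩ ball z r) :=
  ((convex_ball _ _).inter (convex_ball _ _)).isPreconnected

lemma exists_preimage {t : ℝ} (ht : 0 < t) {z : ℂ} (hz : ‖z‖ < 1) :
    ∃ w, ‖w‖ < 1 ∧ f t w = z := by
  let S : Set ℂ := f t '' {w | ‖w‖ < 1 ∧ ‖f t w‖ < 1}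
  have hS : ball (0 : ℂ) 1 ⊆ S := by
    refine (convex_ball _ _).isPreconnected.subset_of_closure_inter_subset ?_ ?_ ?_
    · rw [isOpen_iff_mem_nhds]
      rintro _ ⟨w, ⟨hw, hf⟩, rfl⟩
      rw [← f_map_nhds ht hw hf]
      exact image_mem_map (eventually_mem_domain hw hf)
    · exact ⟨0, by simp, 0, by simp [f_zero], f_zero t⟩
    · rintro z ⟨hzS, hz⟩
      rw [mem_ball_zero_iff] at hz
      obtain ⟨x, hx, hxz⟩ := mem_closure_iff_seq_limit.mp hzS
      choose w hw hwx using hx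
      obtain ⟨a, ha, rfl, -⟩ := exists_limit_preimage ht hz (fun n => (hw n).1)
        (by simpa only [hwx] using hxz)
      exact ⟨a, ⟨ha, hz⟩, rfl⟩
  obtain ⟨w, hw, rfl⟩ := hS (mem_ball_zero_iff.mpr hz)
  exact ⟨w, hw.1, rfl⟩

/-- The set of points of the disk with two distinct preimages is open, since `f_t` is a local
homeomorphism, and relatively closed, since two preimages cannot merge at a point where `f_t` is
locally injective. It omits `0`, so it is empty. -/
lemma preimage_unique {t : ℝ} (ht : 0 < t) {a b : ℂ} (ha : ‖a‖ < 1) (hb : ‖b‖ < 1)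
    (hfa : ‖f t a‖ < 1) (hab : f t a = f t b) : a = b := by
  by_contra hne
  let E : Set ℂ := {z | ‖z‖ < 1 ∧ ∃ v w, ‖v‖ < 1 ∧ ‖w‖ < 1 ∧ v ≠ w ∧ f t v = z ∧ f t w = z}
  have hE : ball (0 : ℂ) 1 ⊆ E := by
    refine (convex_ball _ _).isPreconnected.subset_of_closure_inter_subset ?_ ?_ ?_
    · rw [isOpen_iff_mem_nhds]
      rintro z ⟨hz, v, w, hv, hw, hvw, rfl, hwz⟩
      obtain ⟨U, V, hU, hV, hvU, hwV, hUV⟩ := t2_separation hvw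
      have h1 : f t '' {x | (‖x‖ < 1 ∧ ‖f t x‖ < 1) ∧ x ∈ U} ∈ 𝓝 (f t v) := by
        rw [← f_map_nhds ht hv hz]
        exact image_mem_map ((eventually_mem_domain hv hz).and (hU.mem_nhds hvU))
      have h2 : f t '' {x | (‖x‖ < 1 ∧ ‖f t x‖ < 1) ∧ x ∈ V} ∈ 𝓝 (f t v) := by
        rw [← hwz] at hz ⊢
        rw [← f_map_nhds ht hw hz]
        exact image_mem_map ((eventually_mem_domain hw hz).and (hV.mem_nhds hwV))
      filter_upwards [h1, h2]
      rintro _ ⟨x, hx, rfl⟩ ⟨y, hy, hyx⟩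
      exact ⟨hx.1.2, x, y, hx.1.1, hy.1.1,
        fun h => Set.disjoint_left.mp hUV hx.2 (h ▸ hy.2), rfl, hyx⟩
    · exact ⟨f t a, mem_ball_zero_iff.mpr hfa, hfa, a, b, ha, hb, hne, rfl, hab.symm⟩
    · rintro z ⟨hzE, hz⟩
      rw [mem_ball_zero_iff] at hz
      obtain ⟨x, hx, hxz⟩ := mem_closure_iff_seq_limit.mp hzE
      choose hx v w hv hw hvw hfv hfw using hx
      obtain ⟨p, hp, hfp, φ, hφ, hvp⟩ := exists_limit_preimage ht hz hv
        (by simpa only [hfv] using hxz)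
      obtain ⟨q, hq, hfq, ψ, hψ, hwq⟩ := exists_limit_preimage ht hz (fun n => hw (φ n))
        (by simpa only [hfw, Function.comp_def] using hxz.comp hφ.tendsto_atTop)
      refine ⟨hz, p, q, hp, hq, ?_, hfp, hfq⟩
      rintro rfl
      have hinj := ((hasStrictDerivAt_f t hp).hasStrictFDerivAt_equiv
        (deriv_f_ne_zero ht hp (hfp ▸ hz))).eventually_left_inverse
      obtain ⟨n, h1, h2⟩ := (((hvp.comp hψ.tendsto_atTop).eventually hinj).and
        (hwq.eventually hinj)).exists
      simp only [Function.comp_apply] at h1 h2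
      rw [hfv] at h1
      rw [hfw] at h2
      exact hvw _ (h1.symm.trans h2)
  obtain ⟨-, v, w, hv, hw, hvw, hfv, hfw⟩ := hE (mem_ball_self one_pos)
  have h1 := norm_le_norm_f ht hv.le
  have h2 := norm_le_norm_f ht hw.le
  rw [hfv, norm_zero, norm_le_zero_iff] at h1
  rw [hfw, norm_zero, norm_le_zero_iff] at h2
  exact hvw (h1.trans h2.symm)

lemma eventually_f_ne (t : ℝ) {z a : ℂ} (hz : z ≠ 0) (ha : a ≠ 1) :
    ∀ᶠ w in 𝓝[≠] a, f t w ≠ z := by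
  refine ((analyticAt_f t ha).eventually_eq_or_eventually_ne
    (analyticAt_const (v := z))).resolve_left fun h => hz ?_
  have h1 : AnalyticOnNhd ℂ (f t) {1}ᶜ := fun w hw => analyticAt_f t hw
  have h2 := h1.eqOn_of_preconnected_of_eventuallyEq analyticOnNhd_const
    (isConnected_compl_singleton_of_one_lt_rank (by simp) 1).isPreconnected ha h
  exact ((f_zero t).symm.trans (h2 (by simp : (0 : ℂ) ∈ ({1}ᶜ : Set ℂ)))).symm

/-- The cluster set of a continuous right inverse of `f_t` at a boundary point `z` is a continuum
contained in `f_t⁻¹(z) ∪ {1}`. If it had a point `a ≠ 1` and a second point, it would meet every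
small circle around `a`, while solutions of `f_t w = z` are isolated. -/
lemma cluster_eq {t : ℝ} {χ : ℂ → ℂ} (hc : ContinuousOn χ (ball 0 1))
    (hχ : ∀ z ∈ ball (0 : ℂ) 1, f t (χ z) = z) {z : ℂ} (hz : ‖z‖ = 1) {a b : ℂ} (ha1 : a ≠ 1)
    (ha : MapClusterPt a (𝓝[ball 0 1] z) χ) (hb : MapClusterPt b (𝓝[ball 0 1] z) χ) :
    a = b := by
  by_contra hab
  have hz0 : z ≠ 0 := by rintro rfl; simp at hz
  have key : ∀ w, w ≠ 1 → MapClusterPt w (𝓝[ball 0 1] z) χ → f t w = z := by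
    intro w hw hcl
    have h1 := hcl.continuousAt_comp (continuousAt_f t hw)
    have h2 : Tendsto (f t ∘ χ) (𝓝[ball 0 1] z) (𝓝 z) :=
      (tendsto_nhdsWithin_of_tendsto_nhds tendsto_id).congr'
        (eventually_nhdsWithin_of_forall fun w hw => (hχ w hw).symm)
    exact eq_of_nhds_neBot (h1.neBot.mono (inf_le_inf_left _ h2))
  -- a radius `s` below `dist a b` and `dist a 1` whose circle around `a` misses `f_t⁻¹(z)`
  obtain ⟨ε, hε, hball⟩ := Metric.eventually_nhds_iff.mp
    (eventually_nhdsWithin_iff.mp (eventually_f_ne t hz0 ha1))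
  obtain ⟨s, hs0, hs⟩ := exists_between
    (lt_min hε (lt_min (dist_pos.mpr (Ne.symm hab)) (dist_pos.mpr ha1.symm)))
  rw [lt_min_iff, lt_min_iff] at hs
  obtain ⟨hsε, hsb, hs1⟩ := hs
  -- the intermediate value theorem for `dist (χ x) a` on the convex sets `ball 0 1 ∩ ball z r`
  have hfreq : ∃ᶠ x in 𝓝[ball 0 1] z, χ x ∈ sphere a s := by
    rw [(nhdsWithin_basis_ball (x := z) (s := ball (0 : ℂ) 1)).frequently_iff]
    intro r hr
    have hmem : ball z r ∩ ball 0 1 ∈ 𝓝[ball 0 1] z :=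
      inter_mem (mem_nhdsWithin_of_mem_nhds (ball_mem_nhds z hr)) self_mem_nhdsWithin
    obtain ⟨x, hxa, hx⟩ := ((mapClusterPt_iff_frequently.mp ha _
      (ball_mem_nhds a hs0)).and_eventually hmem).exists
    obtain ⟨y, hyb, hy⟩ := ((mapClusterPt_iff_frequently.mp hb _
      ((isOpen_lt continuous_const (continuous_id.dist continuous_const)).mem_nhds
        hsb)).and_eventually hmem).exists
    rw [Set.inter_comm] at hx hy ⊢
    obtain ⟨p, hp, hps⟩ := (isPreconnected_ball_inter z r).intermediate_value hx hy
      (f := fun x => dist (χ x) a)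
      (continuous_dist.comp_continuousOn
        ((hc.mono Set.inter_subset_left).prodMk continuousOn_const))
      ⟨(mem_ball.mp hxa).le, le_of_lt hyb⟩
    exact ⟨p, hp, hps⟩
  obtain ⟨c, hc, hcl⟩ := (isCompact_sphere a s).exists_mapClusterPt_of_frequently hfreq
  rw [mem_sphere] at hc
  have hc1 : c ≠ 1 := by
    rintro rfl
    exact hs1.ne' hc
  have hca : c ≠ a := by
    rintro rfl
    rw [dist_self] at hc
    exact hs0.ne hc
  exact hball (hc ▸ hsε) hca (key c hc1 hcl)

lemma exists_boundary_limit {t : ℝ} {χ : ℂ → ℂ} (hc : ContinuousOn χ (ball 0 1))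
    (hb : ∀ z ∈ ball (0 : ℂ) 1, ‖χ z‖ < 1)
    (hχ : ∀ z ∈ ball (0 : ℂ) 1, f t (χ z) = z) {z : ℂ} (hz : ‖z‖ = 1) :
    ∃ y, Tendsto χ (𝓝[ball 0 1] z) (𝓝 y) := by
  have hmem : ∀ᶠ x in 𝓝[ball 0 1] z, χ x ∈ closedBall (0 : ℂ) 1 :=
    eventually_nhdsWithin_of_forall fun x hx => mem_closedBall_zero_iff.mpr (hb x hx).le
  by_cases h : ∃ a, a ≠ 1 ∧ MapClusterPt a (𝓝[ball 0 1] z) χ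
  · obtain ⟨a, ha1, ha⟩ := h
    exact ⟨a, (isCompact_closedBall 0 1).tendsto_nhds_of_unique_mapClusterPt hmem
      fun x _ hx => (cluster_eq hc hχ hz ha1 ha hx).symm⟩
  · push Not at h
    exact ⟨1, (isCompact_closedBall 0 1).tendsto_nhds_of_unique_mapClusterPt hmem
      fun x _ hx => by_contra fun hx1 => h x hx1 hx⟩

theorem exists_chi_on_disk (t : ℝ) (ht : 0 < t) :
    ∃ χ : ℂ → ℂ,
      Set.InjOn χ (Metric.ball (0 : ℂ) 1) ∧
      DifferentiableOn ℂ χ (Metric.ball (0 : ℂ) 1) ∧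
      χ 0 = 0 ∧
      (∀ z ∈ Metric.ball (0 : ℂ) 1, χ z ≠ 1) ∧
      (∀ z ∈ Metric.ball (0 : ℂ) 1, f t (χ z) = z) ∧
      ∃ g : ℂ → ℂ, ContinuousOn g (Metric.closedBall (0 : ℂ) 1) ∧
        ∀ z ∈ Metric.ball (0 : ℂ) 1, g z = χ z := by
  have hex : ∀ z : ℂ, ∃ w, z ∈ ball (0 : ℂ) 1 → ‖w‖ < 1 ∧ f t w = z := fun z => by
    by_cases hz : z ∈ ball (0 : ℂ) 1
    · obtain ⟨w, hw⟩ := exists_preimage ht (mem_ball_zero_iff.mp hz)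
      exact ⟨w, fun _ => hw⟩
    · exact ⟨0, fun h => absurd h hz⟩
  choose χ hχ using hex
  have hb : ∀ z ∈ ball (0 : ℂ) 1, ‖χ z‖ < 1 := fun z hz => (hχ z hz).1
  have hf : ∀ z ∈ ball (0 : ℂ) 1, f t (χ z) = z := fun z hz => (hχ z hz).2
  have hleft : ∀ w, ‖w‖ < 1 → ‖f t w‖ < 1 → χ (f t w) = w := fun w hw hfw => by
    have hm := mem_ball_zero_iff.mpr hfw
    exact preimage_unique ht (hb _ hm) hw (by rwa [hf _ hm]) (hf _ hm)
  have hdiff : ∀ z ∈ ball (0 : ℂ) 1, DifferentiableAt ℂ χ z := fun z hz => by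
    have hfz : ‖f t (χ z)‖ < 1 := by rw [hf z hz]; exact mem_ball_zero_iff.mp hz
    have h := (hasStrictDerivAt_f t (hb z hz)).to_local_left_inverse
      (deriv_f_ne_zero ht (hb z hz) hfz)
      ((eventually_mem_domain (hb z hz) hfz).mono fun w hw => hleft w hw.1 hw.2)
    rw [hf z hz] at h
    exact h.hasDerivAt.differentiableAt
  have hlim : ∀ z ∈ closedBall (0 : ℂ) 1, ∃ y, Tendsto χ (𝓝[ball 0 1] z) (𝓝 y) := fun z hz => by
    rcases (mem_closedBall_zero_iff.mp hz).lt_or_eq with h | h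
    · exact ⟨χ z, (hdiff z (mem_ball_zero_iff.mpr h)).continuousAt.mono_left nhdsWithin_le_nhds⟩
    · exact exists_boundary_limit
        (fun z hz => (hdiff z hz).continuousAt.continuousWithinAt) hb hf h
  refine ⟨χ, fun x hx y hy h => ?_, fun z hz => (hdiff z hz).differentiableWithinAt, ?_,
    fun z hz => ne_one_of_norm_lt (hb z hz), hf, extendFrom (ball 0 1) χ,
    continuousOn_extendFrom (closure_ball (0 : ℂ) one_ne_zero).ge hlim, fun z hz =>
      extendFrom_eq (subset_closure hz)
        ((hdiff z hz).continuousAt.mono_left nhdsWithin_le_nhds)⟩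
  · rw [← hf x hx, ← hf y hy, h]
  · have := hleft 0 (by simp) (by simp [f_zero])
    rwa [f_zero] at this
end

section
/- Let A be a unital C*-algebra ordered by its cone of positive elements, and let τ : A → ℂ be a positive linear functional that is tracial, i.e., τ(ab) = τ(ba) for all a, b ∈ A. Then for every invertible a ∈ A and every ε > 0, the numbers τ[(a*a + ε)⁻¹(aa* + ε)⁻¹] and τ[(aa*)⁻¹(a*a + ε)⁻¹] are real and satisfy τ[(a*a + ε)⁻¹(aa* + ε)⁻¹] ≤ τ[(aa*)⁻¹(a*a + ε)⁻¹]. -/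
/-!
With `p = (a a*)⁻¹`, `q = (a a* + ε)⁻¹` and `r = (a* a + ε)⁻¹`, antitonicity of the inverse on
strictly positive elements gives `0 ≤ q ≤ p`. A positive trace takes a nonnegative real value on
the product of two positive elements, so `τ (p r)`, `τ (r q) = τ (q r)` and `τ ((p - q) r)` are all
real and nonnegative.
-/

/-- Writing `x = c* c`, traciality turns `x y` into the positive element `c y c*`. -/
lemma trace_mul_nonneg {A : Type*} [CStarAlgebra A] [PartialOrder A] [StarOrderedRing A]
    (τ : A →ₗ[ℂ] ℂ)
    (hpos : ∀ x : A, 0 ≤ x → 0 ≤ (τ x).re ∧ (τ x).im = 0)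
    (htr : ∀ x y : A, τ (x * y) = τ (y * x))
    {x y : A} (hx : 0 ≤ x) (hy : 0 ≤ y) :
    0 ≤ (τ (x * y)).re ∧ (τ (x * y)).im = 0 := by
  obtain ⟨c, rfl⟩ := CStarAlgebra.nonneg_iff_eq_star_mul_self.mp hx
  rw [mul_assoc, htr]
  exact hpos _ (star_right_conjugate_nonneg hy c)

theorem trace_inverse_estimate_step1
    {A : Type*} [NormedRing A] [StarRing A] [CStarRing A] [CompleteSpace A]
    [NormedAlgebra ℂ A] [StarModule ℂ A] [PartialOrder A] [StarOrderedRing A]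
    (τ : A →ₗ[ℂ] ℂ)
    (hpos : ∀ x : A, 0 ≤ x → 0 ≤ (τ x).re ∧ (τ x).im = 0)
    (htr : ∀ x y : A, τ (x * y) = τ (y * x))
    (a : A) (ha : IsUnit a) (ε : ℝ) (hε : 0 < ε) :
    (τ (Ring.inverse (star a * a + (ε : ℂ) • 1) *
        Ring.inverse (a * star a + (ε : ℂ) • 1))).im = 0 ∧
    (τ (Ring.inverse (a * star a) *
        Ring.inverse (star a * a + (ε : ℂ) • 1))).im = 0 ∧
    (τ (Ring.inverse (star a * a + (ε : ℂ) • 1) *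
        Ring.inverse (a * star a + (ε : ℂ) • 1))).re ≤
      (τ (Ring.inverse (a * star a) *
        Ring.inverse (star a * a + (ε : ℂ) • 1))).re := by
  letI : CStarAlgebra A := {}
  have hε1 : (0 : A) ≤ (ε : ℂ) • 1 := by
    rw [Complex.coe_smul]
    exact smul_nonneg hε.le zero_le_one
  have hx : IsStrictlyPositive (star a * a) :=
    (ha.star.mul ha).isStrictlyPositive (star_mul_self_nonneg a)
  have hy : IsStrictlyPositive (a * star a) :=
    (ha.mul ha.star).isStrictlyPositive (mul_star_self_nonneg a)
  have hr := (hx.add_nonneg hε1).ringInverse.nonneg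
  have hq := (hy.add_nonneg hε1).ringInverse.nonneg
  have hp := hy.ringInverse.nonneg
  have hpq := sub_nonneg.mpr
    (CStarAlgebra.ringInverse_le_ringInverse (le_add_of_nonneg_right hε1) hy)
  have hdiff := (trace_mul_nonneg τ hpos htr hpq hr).1
  rw [sub_mul, map_sub, Complex.sub_re, sub_nonneg] at hdiff
  refine ⟨(trace_mul_nonneg τ hpos htr hr hq).2, (trace_mul_nonneg τ hpos htr hp hr).2, ?_⟩
  rwa [htr]
end

section
/- Let A be a unital C*-algebra ordered by its cone of positive elements, and let τ : A → ℂ be a positive linear functional that is tracial, i.e., τ(ab) = τ(ba) for all a, b ∈ A. Then for every invertible a ∈ A and every ε > 0, the numbers τ[(aa*)⁻¹(a*a + ε)⁻¹] and τ[a⁻²(a⁻²)*] are real and satisfy τ[(aa*)⁻¹(a*a + ε)⁻¹] ≤ τ[a⁻²(a⁻²)*]. -/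
/-!
Write `b = a⁻¹` and `R = (a⋆a + ε)⁻¹`. Since `(aa⋆)⁻¹ = b⋆b`, traciality turns the left-hand side
into `τ (b R b⋆)`. Since `(a⋆a)⁻¹ = bb⋆`, the right-hand side is `τ (b (bb⋆) b⋆)`.
Inversion is order-reversing on strictly positive elements, so `0 ≤ R ≤ bb⋆`
(`inverse_add_bounds`), and conjugation by `b` followed by `τ` preserves this order.
-/

theorem smul_one_nonneg_aux {A : Type*} [CStarAlgebra A] [PartialOrder A] [StarOrderedRing A]
    {ε : ℝ} (hε : 0 < ε) : (0 : A) ≤ (ε : ℂ) • 1 := by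
  have h := star_mul_self_nonneg (((Real.sqrt ε : ℝ) : ℂ) • (1 : A))
  rwa [star_smul, star_one, smul_mul_smul_comm, one_mul, Complex.star_def, Complex.conj_ofReal,
    ← Complex.ofReal_mul, Real.mul_self_sqrt hε.le] at h

/-- For a unit `u`, `0 ≤ (u⋆u + ε)⁻¹ ≤ (u⋆u)⁻¹`, with `(u⋆u)⁻¹` written as `u⁻¹(u⁻¹)⋆`. -/
theorem inverse_add_bounds {A : Type*} [CStarAlgebra A] [PartialOrder A] [StarOrderedRing A]
    (u : Aˣ) {ε : ℝ} (hε : 0 < ε) :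
    0 ≤ Ring.inverse (star (u : A) * u + (ε : ℂ) • 1) ∧
    Ring.inverse (star (u : A) * u + (ε : ℂ) • 1) ≤ (↑u⁻¹ : A) * star (↑u⁻¹ : A) := by
  have hP : (0 : A) ≤ ((star u * u : Aˣ) : A) := by
    simp
  have hle : ((star u * u : Aˣ) : A) ≤ star (u : A) * u + (ε : ℂ) • 1 := by
    simpa using smul_one_nonneg_aux (A := A) hε
  obtain ⟨v, hv⟩ := CStarAlgebra.isUnit_of_le _ hle
    (Units.isStrictlyPositive_iff.mpr hP)
  rw [← hv] at hle ⊢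
  rw [Ring.inverse_unit]
  refine ⟨CFC.inv_nonneg_of_nonneg v (hP.trans hle), ?_⟩
  simpa using CStarAlgebra.inv_le_inv hP hle

/-- The estimate for the bundled class `CStarAlgebra`. -/
theorem trace_inverse_estimate_aux {A : Type*} [CStarAlgebra A] [PartialOrder A]
    [StarOrderedRing A] (τ : A →ₗ[ℂ] ℂ)
    (hpos : ∀ x : A, 0 ≤ x → 0 ≤ (τ x).re ∧ (τ x).im = 0)
    (htr : ∀ x y : A, τ (x * y) = τ (y * x))
    (a : A) (ha : IsUnit a) (ε : ℝ) (hε : 0 < ε) :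
    (τ (Ring.inverse (a * star a) *
        Ring.inverse (star a * a + (ε : ℂ) • 1))).im = 0 ∧
    (τ (Ring.inverse a ^ 2 * star (Ring.inverse a ^ 2))).im = 0 ∧
    (τ (Ring.inverse (a * star a) *
        Ring.inverse (star a * a + (ε : ℂ) • 1))).re ≤
      (τ (Ring.inverse a ^ 2 * star (Ring.inverse a ^ 2))).re := by
  obtain ⟨u, rfl⟩ := ha
  obtain ⟨h0, h1⟩ := inverse_add_bounds u hε
  set R := Ring.inverse (star (u : A) * u + (ε : ℂ) • 1)
  have hinv : Ring.inverse ((u : A) * star (u : A)) = star (↑u⁻¹ : A) * ↑u⁻¹ := by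
    have h := Ring.inverse_unit (u * star u)
    simpa using h
  have hL : τ (Ring.inverse ((u : A) * star (u : A)) * R)
      = τ ((↑u⁻¹ : A) * R * star (↑u⁻¹ : A)) := by
    rw [hinv, mul_assoc, htr]
  have hR : (↑u⁻¹ : A) ^ 2 * star ((↑u⁻¹ : A) ^ 2)
      = (↑u⁻¹ : A) * (↑u⁻¹ * star (↑u⁻¹ : A)) * star (↑u⁻¹ : A) := by
    simp only [pow_two, star_mul, mul_assoc]
  rw [hL, Ring.inverse_unit, hR]
  refine ⟨(hpos _ (star_right_conjugate_nonneg h0 _)).2,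
    (hpos _ (star_right_conjugate_nonneg (h0.trans h1) _)).2, ?_⟩
  have h := (hpos _ (star_right_conjugate_nonneg (sub_nonneg.mpr h1) (↑u⁻¹ : A))).1
  rw [mul_sub, sub_mul, map_sub, Complex.sub_re] at h
  linarith

theorem trace_inverse_estimate_step2
    {A : Type*} [NormedRing A] [StarRing A] [CStarRing A] [CompleteSpace A]
    [NormedAlgebra ℂ A] [StarModule ℂ A] [PartialOrder A] [StarOrderedRing A]
    (τ : A →ₗ[ℂ] ℂ)
    (hpos : ∀ x : A, 0 ≤ x → 0 ≤ (τ x).re ∧ (τ x).im = 0)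
    (htr : ∀ x y : A, τ (x * y) = τ (y * x))
    (a : A) (ha : IsUnit a) (ε : ℝ) (hε : 0 < ε) :
    (τ (Ring.inverse (a * star a) *
        Ring.inverse (star a * a + (ε : ℂ) • 1))).im = 0 ∧
    (τ (Ring.inverse a ^ 2 * star (Ring.inverse a ^ 2))).im = 0 ∧
    (τ (Ring.inverse (a * star a) *
        Ring.inverse (star a * a + (ε : ℂ) • 1))).re ≤
      (τ (Ring.inverse a ^ 2 * star (Ring.inverse a ^ 2))).re := by
  -- The unbundled hypotheses on `A` are exactly the parents of `CStarAlgebra A`.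
  let _ : CStarAlgebra A := {}
  exact trace_inverse_estimate_aux τ hpos htr a ha ε hε
end
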